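/- (Frank–Geisinger form of the projection inequality) Let T ≥ 0 be a self-adjoint operator, P an orthogonal projection, and f an operator monotone function on [0,∞) with f(0)=0. Then P f(T) P ≤ f(PTP) as quadratic forms. -/

import Mathlib

/-!
Put `Q = 1 - P`. For `ε > 0`, expanding the nonnegative operator `(εP - Q) T (εP - Q)` gives
`T ≤ (1 + ε) P T P + (1 + 1/ε) Q T Q`. The right-hand side commutes with `P`, so monotonicity of
`f` followed by compression to the range of `P` yields `P f(T) P ≤ f((1 + ε) P T P)`. Since
`f(cx) ≤ c f(x)` for `c ≥ 1`, this is at most `(1 + ε) f(P T P)`; let `ε → 0`.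

The scaling inequality is the same argument applied to a multiple of a projection `q` with
`p q p = t p` for `t = 1/c`, which exists in dimension at least two. Finally, `f` has to be
continuous on every spectrum involved: where it is not, the functional calculus takes the
default value `0`, and then `f ≤ 0` at some positive point, which forces `f = 0` on `[0, ∞)`.
-/

open Filter Set Topology

section Intertwining

variable {𝕜 A : Type*} {P : A → Prop} [RCLike 𝕜] [Ring A] [StarRing A] [Algebra 𝕜 A]
  [TopologicalSpace A] [ContinuousFunctionalCalculus 𝕜 A P] [IsSemitopologicalRing A] [T2Space A]

variable {x a b : A}

theorem semiconjBy_cfcHom {s : Set 𝕜} [CompactSpace s] (h : SemiconjBy x a b)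
    (h_star : SemiconjBy x (star a) (star b)) (ha : P a) (hb : P b)
    (hsa : spectrum 𝕜 a ⊆ s) (hsb : spectrum 𝕜 b ⊆ s) (g : C(s, 𝕜)) :
    SemiconjBy x (cfcHom ha (g.comp ⟨inclusion hsa, continuous_inclusion hsa⟩))
      (cfcHom hb (g.comp ⟨inclusion hsb, continuous_inclusion hsb⟩)) := by
  set toA : C(spectrum 𝕜 a, s) := ⟨inclusion hsa, continuous_inclusion hsa⟩
  set toB : C(spectrum 𝕜 b, s) := ⟨inclusion hsb, continuous_inclusion hsb⟩
  have id_a : cfcHom ha (((ContinuousMap.id 𝕜).restrict s).comp toA) = a := cfcHom_id ha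
  have id_b : cfcHom hb (((ContinuousMap.id 𝕜).restrict s).comp toB) = b := cfcHom_id hb
  induction g using ContinuousMap.induction_on_of_compact with
  | const r =>
    have const_a : cfcHom ha ((ContinuousMap.const s r).comp toA) = algebraMap 𝕜 A r :=
      AlgHomClass.commutes (cfcHom ha) r
    have const_b : cfcHom hb ((ContinuousMap.const s r).comp toB) = algebraMap 𝕜 A r :=
      AlgHomClass.commutes (cfcHom hb) r
    rw [const_a, const_b]
    exact (Algebra.commutes r x).symm
  | id => rwa [id_a, id_b]
  | star_id =>
    have star_a : cfcHom ha ((star ((ContinuousMap.id 𝕜).restrict s)).comp toA) = star a :=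
      (map_star (cfcHom ha) _).trans (congrArg star id_a)
    have star_b : cfcHom hb ((star ((ContinuousMap.id 𝕜).restrict s)).comp toB) = star b :=
      (map_star (cfcHom hb) _).trans (congrArg star id_b)
    rwa [star_a, star_b]
  | add g₁ g₂ h₁ h₂ =>
    rw [ContinuousMap.add_comp, ContinuousMap.add_comp, map_add, map_add]
    exact h₁.add_right h₂
  | mul g₁ g₂ h₁ h₂ =>
    rw [ContinuousMap.mul_comp, ContinuousMap.mul_comp, map_mul, map_mul]
    exact h₁.mul_right h₂
  | frequently g hg =>
    have cont_a : Continuous fun g : C(s, 𝕜) ↦ cfcHom ha (g.comp toA) :=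
      (cfcHom_continuous ha).comp (ContinuousMap.continuous_precomp toA)
    have cont_b : Continuous fun g : C(s, 𝕜) ↦ cfcHom hb (g.comp toB) :=
      (cfcHom_continuous hb).comp (ContinuousMap.continuous_precomp toB)
    exact (isClosed_eq (cont_a.const_mul x) (cont_b.mul_const x)).mem_of_frequently_of_tendsto
      hg tendsto_id

theorem semiconjBy_cfc {f : 𝕜 → 𝕜} (h : SemiconjBy x a b)
    (h_star : SemiconjBy x (star a) (star b)) (ha : P a) (hb : P b)
    (hfa : ContinuousOn f (spectrum 𝕜 a)) (hfb : ContinuousOn f (spectrum 𝕜 b)) :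
    SemiconjBy x (cfc f a) (cfc f b) := by
  have a_compact := ContinuousFunctionalCalculus.isCompact_spectrum (R := 𝕜) a
  have b_compact := ContinuousFunctionalCalculus.isCompact_spectrum (R := 𝕜) b
  have : CompactSpace ↥(spectrum 𝕜 a ∪ spectrum 𝕜 b) :=
    isCompact_iff_compactSpace.mp (a_compact.union b_compact)
  have hf := hfa.union_of_isClosed hfb a_compact.isClosed b_compact.isClosed
  rw [cfc_apply f a ha hfa, cfc_apply f b hb hfb]
  exact semiconjBy_cfcHom h h_star ha hb subset_union_left subset_union_right ⟨_, hf.domRestrict⟩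

end Intertwining

theorem continuousOn_spectrum_zero {A : Type*} [Ring A] [Algebra ℝ A] (f : ℝ → ℝ) :
    ContinuousOn f (spectrum ℝ (0 : A)) := by
  rcases subsingleton_or_nontrivial A with _ | _
  · simp [spectrum.of_subsingleton]
  · simp [spectrum.zero_eq]

section SelfAdjoint

variable {A : Type*} [Ring A] [StarRing A] [Algebra ℝ A] [TopologicalSpace A]
  [ContinuousFunctionalCalculus ℝ A IsSelfAdjoint] [T2Space A] {f : ℝ → ℝ} {p a : A}

theorem conjugate_cfc_eq_cfc_conjugate_of_commute [IsSemitopologicalRing A]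
    (hp : IsStarProjection p) (ha : IsSelfAdjoint a) (hpa : Commute p a) (hf0 : f 0 = 0)
    (hfa : ContinuousOn f (spectrum ℝ a)) (hfpa : ContinuousOn f (spectrum ℝ (p * a * p))) :
    p * cfc f a * p = cfc f (p * a * p) := by
  have hpap : IsSelfAdjoint (p * a * p) := by
    simpa only [hp.isSelfAdjoint.star_eq] using ha.conjugate p
  have on_range : p * cfc f (p * a * p) = cfc f a * p := by
    have h : SemiconjBy p (p * a * p) a := by
      rw [SemiconjBy, ← mul_assoc, ← mul_assoc, hp.isIdempotentElem.eq, hpa.eq, mul_assoc,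
        hp.isIdempotentElem.eq]
    exact semiconjBy_cfc h (by rwa [hpap.star_eq, ha.star_eq]) hpap ha hfpa hfa
  have on_kernel : (1 - p) * cfc f (p * a * p) = 0 := by
    have h : SemiconjBy (1 - p) (p * a * p) 0 := by
      rw [SemiconjBy, ← mul_assoc, ← mul_assoc, hp.isIdempotentElem.one_sub_mul_self]
      simp only [zero_mul]
    have h_cfc := semiconjBy_cfc h (by rwa [hpap.star_eq, star_zero]) hpap (.zero A) hfpa
      (continuousOn_spectrum_zero f)
    rwa [cfc_apply_zero, hf0, map_zero, SemiconjBy, zero_mul] at h_cfc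
  rw [sub_mul, one_mul, sub_eq_zero] at on_kernel
  rw [mul_assoc, ← on_range, ← on_kernel, ← on_kernel]

theorem cfc_smul_add_smul_one_sub (f : ℝ → ℝ) (hp : IsStarProjection p) (r s : ℝ) :
    cfc f (r • p + s • (1 - p)) = f r • p + f s • (1 - p) := by
  have h_spec : spectrum ℝ p ⊆ {0, 1} := hp.isIdempotentElem.spectrum_subset ℝ
  have hfin : (spectrum ℝ p).Finite := hp.isIdempotentElem.finite_spectrum ℝ
  have affine (r s : ℝ) : cfc (fun x ↦ r * x + s * (1 - x)) p = r • p + s • (1 - p) := by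
    have := hp.isSelfAdjoint
    rw [cfc_add .., cfc_const_mul .., cfc_const_mul .., cfc_sub .., cfc_id' .., cfc_const_one ..]
  rw [← affine r s, ← cfc_comp' f _ p ((hfin.image _).continuousOn f)
    (by fun_prop) hp.isSelfAdjoint, ← affine (f r) (f s)]
  refine cfc_congr fun x hx ↦ ?_
  rcases h_spec hx with rfl | rfl <;> simp

theorem cfc_smul_of_isStarProjection (hp : IsStarProjection p) (hf0 : f 0 = 0) (r : ℝ) :
    cfc f (r • p) = f r • p := by
  simpa [hf0] using cfc_smul_add_smul_one_sub f hp r 0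

theorem cfc_smul_le_smul_cfc [PartialOrder A] [StarOrderedRing A]
    {c : ℝ} (ha : IsSelfAdjoint a)
    (hfa : ContinuousOn f (spectrum ℝ a)) (hfca : ContinuousOn f (spectrum ℝ (c • a)))
    (h : ∀ x ∈ spectrum ℝ a, f (c * x) ≤ c * f x) :
    cfc f (c • a) ≤ c • cfc f a := by
  have h_image : ContinuousOn f ((c * ·) '' spectrum ℝ a) := by
    rwa [← cfc_map_spectrum .., cfc_const_mul_id c a]
  rw [← cfc_comp_const_mul c f a h_image, ← cfc_const_mul c f a]
  exact cfc_mono h (h_image.comp (by fun_prop) (mapsTo_image _ _)) (by fun_prop)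

end SelfAdjoint

theorem star_add_mul_mul_add_le {A : Type*} [Ring A] [StarRing A] [PartialOrder A]
    [StarOrderedRing A] [Algebra ℝ A] [StarModule ℝ A] [PosSMulMono ℝ A]
    {a : A} (ha : 0 ≤ a) (x y : A) {ε : ℝ} (hε : 0 < ε) :
    star (x + y) * a * (x + y) ≤
      (1 + ε) • (star x * a * x) + (1 + ε⁻¹) • (star y * a * y) := by
  have h_square : ε⁻¹ • (star (ε • x - y) * a * (ε • x - y)) =
      (1 + ε) • (star x * a * x) + (1 + ε⁻¹) • (star y * a * y) -
        star (x + y) * a * (x + y) := by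
    simp only [star_sub, star_add, star_smul, star_trivial, sub_mul, mul_sub, add_mul, mul_add,
      smul_mul_assoc, mul_smul_comm, smul_sub, smul_smul]
    match_scalars <;> field_simp
    all_goals ring
  rw [← sub_nonneg, ← h_square]
  exact smul_nonneg (inv_nonneg.2 hε.le) (star_left_conjugate_nonneg ha _)

theorem le_of_forall_one_lt_le_smul {E : Type*} [TopologicalSpace E] [Preorder E]
    [ClosedIciTopology E] [AddCommMonoid E] [Module ℝ E] [ContinuousSMul ℝ E] {x y : E}
    (h : ∀ c : ℝ, 1 < c → x ≤ c • y) : x ≤ y := by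
  have h_cont : Continuous fun c : ℝ ↦ c • y := by fun_prop
  have h_tendsto : Tendsto (fun c : ℝ ↦ c • y) (𝓝[>] 1) (𝓝 y) := by
    simpa only [one_smul] using (h_cont.tendsto 1).mono_left nhdsWithin_le_nhds
  exact ge_of_tendsto h_tendsto (eventually_mem_nhdsWithin.mono h)

section CStarAlgebra

variable {A : Type*} [CStarAlgebra A] [PartialOrder A] [StarOrderedRing A] {f : ℝ → ℝ}

theorem monotoneOn_Ici_of_monotoneOn_cfc [Nontrivial A]
    (hf : MonotoneOn (cfc f) (Ici (0 : A))) : MonotoneOn f (Ici 0) := by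
  intro x hx y hy hxy
  have h := hf (algebraMap_nonneg A hx) (algebraMap_nonneg A hy) (algebraMap_mono A hxy)
  rw [cfc_algebraMap, cfc_algebraMap] at h
  simpa using h

theorem mul_map_le_map_mul_of_monotoneOn_cfc {p q : A} {t c y : ℝ}
    (hf : MonotoneOn (cfc f) (Ici (0 : A))) (hf0 : f 0 = 0)
    (hp : IsStarProjection p) (hp0 : p ≠ 0) (hq : IsStarProjection q)
    (hpq : p * q * p = t • p) (hc : 1 < c) (hy : 0 ≤ y) :
    t * f y ≤ f (c * t * y) := by
  have hε : 0 < c - 1 := sub_pos.2 hc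
  obtain ⟨M, h_upper⟩ : ∃ M : ℝ, y • q ≤ (c * t * y) • p + M • (1 - p) := by
    have h_split := star_add_mul_mul_add_le hq.nonneg p (1 - p) hε
    rw [add_sub_cancel, add_sub_cancel, star_one, one_mul, mul_one, hp.isSelfAdjoint.star_eq,
      hp.one_sub.isSelfAdjoint.star_eq, hpq] at h_split
    have h_corner : (1 - p) * q * (1 - p) ≤ 1 - p := by
      simpa only [mul_one, hp.one_sub.isIdempotentElem.eq]
        using hp.one_sub.isSelfAdjoint.conjugate_le_conjugate hq.le_one
    refine ⟨y * (1 + (c - 1)⁻¹), ?_⟩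
    calc y • q ≤ y • (c • t • p + (1 + (c - 1)⁻¹) • ((1 - p) * q * (1 - p))) := by gcongr
      _ ≤ y • (c • t • p + (1 + (c - 1)⁻¹) • (1 - p)) := by gcongr
      _ = (c * t * y) • p + (y * (1 + (c - 1)⁻¹)) • (1 - p) := by module
  have h_mono := hp.isSelfAdjoint.conjugate_le_conjugate
    (hf (smul_nonneg hy hq.nonneg) ((smul_nonneg hy hq.nonneg).trans h_upper) h_upper)
  rw [cfc_smul_of_isStarProjection hq hf0, cfc_smul_add_smul_one_sub f hp, mul_smul_comm,
    smul_mul_assoc, hpq, smul_smul, mul_add, mul_smul_comm, mul_smul_comm,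
    hp.isIdempotentElem.mul_one_sub_self, smul_zero, add_zero, smul_mul_assoc,
    hp.isIdempotentElem.eq, hp.isIdempotentElem.eq, mul_comm (f y)] at h_mono
  exact le_of_smul_le_smul_right h_mono (lt_of_le_of_ne hp.nonneg hp0.symm)

theorem map_mul_le_mul_map_of_monotoneOn_cfc
    (hf : MonotoneOn (cfc f) (Ici (0 : A))) (hf0 : f 0 = 0)
    (h_proj : ∀ t ∈ Ioo (0 : ℝ) 1, ∃ p q : A,
      IsStarProjection p ∧ IsStarProjection q ∧ p ≠ 0 ∧ p * q * p = t • p)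
    {c x : ℝ} (hc : 1 ≤ c) (hx : 0 ≤ x) : f (c * x) ≤ c * f x := by
  refine le_of_forall_one_lt_le_smul fun d hd ↦ ?_
  have hcd : 1 < c * d := one_lt_mul_of_le_of_lt hc hd
  obtain ⟨p, q, hp, hq, hp0, hpq⟩ :=
    h_proj (c * d)⁻¹ ⟨by positivity, inv_lt_one_of_one_lt₀ hcd⟩
  have h := mul_map_le_map_mul_of_monotoneOn_cfc hf hf0 hp hp0 hq hpq hd
    (show 0 ≤ c * x by positivity)
  have h_arg : d * (c * d)⁻¹ * (c * x) = x := by field_simp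
  rw [h_arg, inv_mul_le_iff₀ (by positivity)] at h
  rw [smul_eq_mul]
  linarith

theorem continuousOn_spectrum_of_monotoneOn_cfc {a p : A} {r : ℝ}
    (hf : MonotoneOn (cfc f) (Ici (0 : A))) (hf0 : f 0 = 0)
    (hf_mul : ∀ c x, 1 ≤ c → 0 ≤ x → f (c * x) ≤ c * f x)
    (hp : IsStarProjection p) (hp0 : p ≠ 0) (hr : 0 < r) (hpa : r • p ≤ a) :
    ContinuousOn f (spectrum ℝ a) := by
  by_contra h_disc
  have : Nontrivial A := ⟨p, 0, hp0⟩
  have hrp : 0 ≤ r • p := smul_nonneg hr.le hp.nonneg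
  have f_mono := monotoneOn_Ici_of_monotoneOn_cfc hf
  have f_r_nonpos : f r ≤ 0 := by
    have h := hf hrp (hrp.trans hpa) hpa
    rw [cfc_smul_of_isStarProjection hp hf0, cfc_apply_of_not_continuousOn a h_disc,
      ← zero_smul ℝ p] at h
    exact le_of_smul_le_smul_right h (lt_of_le_of_ne hp.nonneg hp0.symm)
  have f_zero : ∀ x, 0 ≤ x → f x = 0 := by
    intro x hx
    have hc : 1 ≤ max 1 (x / r) := le_max_left _ _
    have hxc : x ≤ max 1 (x / r) * r := (div_le_iff₀ hr).1 (le_max_right _ _)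
    refine le_antisymm ?_ (hf0 ▸ f_mono self_mem_Ici hx hx)
    calc f x ≤ f (max 1 (x / r) * r) := f_mono hx (hx.trans hxc) hxc
      _ ≤ max 1 (x / r) * f r := hf_mul _ _ hc hr.le
      _ ≤ 0 := mul_nonpos_of_nonneg_of_nonpos (by positivity) f_r_nonpos
  exact h_disc (continuousOn_const.congr fun x hx ↦
    f_zero x (spectrum_nonneg_of_nonneg (hrp.trans hpa) hx))

theorem conjugate_cfc_le_cfc_smul_conjugate {p a : A} {c : ℝ}
    (hf : MonotoneOn (cfc f) (Ici (0 : A))) (hf0 : f 0 = 0)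
    (hf_cont : ∀ b : A, 0 ≤ b → ContinuousOn f (spectrum ℝ b))
    (hp : IsStarProjection p) (ha : 0 ≤ a) (hc : 1 < c) :
    p * cfc f a * p ≤ cfc f (c • (p * a * p)) := by
  have hε : 0 < c - 1 := sub_pos.2 hc
  have hpap : 0 ≤ c • (p * a * p) :=
    smul_nonneg (by positivity) (hp.isSelfAdjoint.conjugate_nonneg ha)
  set b := c • (p * a * p) + (1 + (c - 1)⁻¹) • ((1 - p) * a * (1 - p)) with hb
  have hab : a ≤ b := by
    simpa [hp.isSelfAdjoint.star_eq] using star_add_mul_mul_add_le ha p (1 - p) hε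
  have hpb : p * b = c • (p * a * p) := by
    simp [hb, mul_add, ← mul_assoc, hp.isIdempotentElem.eq, hp.isIdempotentElem.mul_one_sub_self]
  have hbp : b * p = c • (p * a * p) := by
    simp [hb, add_mul, mul_assoc, hp.isIdempotentElem.eq, hp.isIdempotentElem.one_sub_mul_self]
  have hpbp : p * b * p = c • (p * a * p) := by
    rw [hpb, smul_mul_assoc, mul_assoc, hp.isIdempotentElem.eq]
  have hb0 : 0 ≤ b := ha.trans hab
  calc p * cfc f a * p ≤ p * cfc f b * p :=
        hp.isSelfAdjoint.conjugate_le_conjugate (hf ha hb0 hab)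
    _ = cfc f (p * b * p) :=
        conjugate_cfc_eq_cfc_conjugate_of_commute hp hb0.isSelfAdjoint (hpb.trans hbp.symm) hf0
          (hf_cont b hb0) (hf_cont _ (hpbp ▸ hpap))
    _ = cfc f (c • (p * a * p)) := by rw [hpbp]

theorem conjugate_cfc_le_cfc_conjugate {p a : A}
    (hf : MonotoneOn (cfc f) (Ici (0 : A))) (hf0 : f 0 = 0)
    (hf_cont : ∀ b : A, 0 ≤ b → ContinuousOn f (spectrum ℝ b))
    (hf_mul : ∀ c x, 1 ≤ c → 0 ≤ x → f (c * x) ≤ c * f x)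
    (hp : IsStarProjection p) (ha : 0 ≤ a) :
    p * cfc f a * p ≤ cfc f (p * a * p) := by
  have hpap : 0 ≤ p * a * p := hp.isSelfAdjoint.conjugate_nonneg ha
  refine le_of_forall_one_lt_le_smul fun c hc ↦ ?_
  calc p * cfc f a * p ≤ cfc f (c • (p * a * p)) :=
        conjugate_cfc_le_cfc_smul_conjugate hf hf0 hf_cont hp ha hc
    _ ≤ c • cfc f (p * a * p) :=
        cfc_smul_le_smul_cfc hpap.isSelfAdjoint (hf_cont _ hpap)
          (hf_cont _ (smul_nonneg (by positivity) hpap))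
          fun x hx ↦ hf_mul c x hc.le (spectrum_nonneg_of_nonneg hpap hx)

end CStarAlgebra

section RankOne

open InnerProductSpace ContinuousLinearMap

variable {𝕜 H : Type*} [RCLike 𝕜] [NormedAddCommGroup H] [InnerProductSpace 𝕜 H]

theorem exists_norm_eq_one_and_apply_eq_self {P : H →L[𝕜] H} (hP : IsIdempotentElem P)
    (hP0 : P ≠ 0) : ∃ u, ‖u‖ = 1 ∧ P u = u := by
  obtain ⟨x, hx⟩ := DFunLike.ne_iff.1 hP0
  refine ⟨(‖P x‖⁻¹ : 𝕜) • P x, norm_smul_inv_norm hx, ?_⟩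
  rw [map_smul, ← mul_apply_eq_comp, hP.eq]

variable [CompleteSpace H]

theorem exists_isStarProjection_conjugate_eq_smul {u w : H} (hu : ‖u‖ = 1) (hw : ‖w‖ = 1)
    (huw : inner 𝕜 u w = 0) {t : ℝ} (ht : t ∈ Icc 0 1) :
    ∃ p q : H →L[𝕜] H, IsStarProjection p ∧ IsStarProjection q ∧ p ≠ 0 ∧
      p * q * p = (t : 𝕜) • p := by
  have hu0 : u ≠ 0 := norm_ne_zero_iff.1 (by simp [hu])
  let v : H := (√t : 𝕜) • u + (√(1 - t) : 𝕜) • w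
  have h_uv : inner 𝕜 u v = (√t : 𝕜) := by
    simp [v, inner_add_right, inner_smul_right, huw, inner_self_eq_norm_sq_to_K, hu]
  have h_vu : inner 𝕜 v u = (√t : 𝕜) := by
    rw [← inner_conj_symm, h_uv, RCLike.conj_ofReal]
  have hv : ‖v‖ = 1 := by
    have h_orth : inner 𝕜 ((√t : 𝕜) • u) ((√(1 - t) : 𝕜) • w) = 0 := by
      rw [inner_smul_left, inner_smul_right, huw, mul_zero, mul_zero]
    have h_sq := norm_add_sq_eq_norm_sq_add_norm_sq_of_inner_eq_zero _ _ h_orth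
    simp only [norm_smul, RCLike.norm_ofReal, abs_of_nonneg (Real.sqrt_nonneg _), hu, hw, mul_one,
      Real.mul_self_sqrt ht.1, Real.mul_self_sqrt (sub_nonneg.2 ht.2), add_sub_cancel] at h_sq
    exact (mul_self_eq_one_iff.1 h_sq).resolve_right (by linarith [norm_nonneg v])
  refine ⟨rankOne 𝕜 u u, rankOne 𝕜 v v, isStarProjection_rankOne_self hu,
    isStarProjection_rankOne_self hv, rankOne_ne_zero hu0 hu0, ?_⟩
  rw [mul_def, mul_def, rankOne_comp_rankOne, smul_comp, rankOne_comp_rankOne, smul_smul, h_uv,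
    h_vu, ← RCLike.ofReal_mul, Real.mul_self_sqrt ht.1]

theorem exists_isStarProjection_rankOne_self_eq_smul {x : H} (hx : x ≠ 0) :
    ∃ p : H →L[𝕜] H, IsStarProjection p ∧ p ≠ 0 ∧ rankOne 𝕜 x x = ((‖x‖ ^ 2 : ℝ) : 𝕜) • p := by
  have h_unit : ‖(‖x‖⁻¹ : 𝕜) • x‖ = 1 := norm_smul_inv_norm hx
  have h_unit0 : (‖x‖⁻¹ : 𝕜) • x ≠ 0 := norm_ne_zero_iff.1 (by simp [h_unit])
  refine ⟨_, isStarProjection_rankOne_self h_unit, rankOne_ne_zero h_unit0 h_unit0, ?_⟩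
  have hx' : (‖x‖ : 𝕜) ≠ 0 := by simpa using hx
  ext y
  simp only [rankOne_apply, map_pow, map_smul, smul_apply, ContinuousLinearMap.map_smulₛₗ, map_inv₀,
    RCLike.conj_ofReal, smul_smul]
  field_simp

end RankOne

section Hilbert

open InnerProductSpace ContinuousLinearMap

variable {H : Type*} [NormedAddCommGroup H] [InnerProductSpace ℂ H] [CompleteSpace H]

theorem exists_isStarProjection_smul_le {a : H →L[ℂ] H} (ha : 0 ≤ a) (ha0 : a ≠ 0) :
    ∃ p : H →L[ℂ] H, IsStarProjection p ∧ p ≠ 0 ∧ ∃ r : ℝ, 0 < r ∧ r • p ≤ a := by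
  have h_sqrt : IsSelfAdjoint (CFC.sqrt a) := (CFC.sqrt_nonneg a).isSelfAdjoint
  have h_sqrt0 : CFC.sqrt a ≠ 0 := mt (CFC.sqrt_eq_zero_iff a).1 ha0
  obtain ⟨x, hx⟩ := DFunLike.ne_iff.1 h_sqrt0
  have hx0 : x ≠ 0 := fun h ↦ hx (by simp [h])
  obtain ⟨p, hp, hp0, h_rankOne⟩ := exists_isStarProjection_rankOne_self_eq_smul (𝕜 := ℂ) hx
  have h_le : ‖CFC.sqrt a x‖ ^ 2 • p ≤ ‖x‖ ^ 2 • a := by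
    calc ‖CFC.sqrt a x‖ ^ 2 • p = rankOne ℂ (CFC.sqrt a x) (CFC.sqrt a x) := by
          rw [h_rankOne]; exact (Complex.coe_smul _ _).symm
      _ = star (CFC.sqrt a) * rankOne ℂ x x * CFC.sqrt a := by
          rw [h_sqrt.star_eq, mul_def, mul_def, comp_rankOne, rankOne_comp, h_sqrt.adjoint_eq]
      _ ≤ ‖rankOne ℂ x x‖ • (star (CFC.sqrt a) * CFC.sqrt a) :=
          CStarAlgebra.star_left_conjugate_le_norm_smul
            (isPositive_rankOne_self x).isSelfAdjoint
      _ = ‖x‖ ^ 2 • a := by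
          rw [norm_rankOne, h_sqrt.star_eq, CFC.sqrt_mul_sqrt_self a, sq]
  refine ⟨p, hp, hp0, (‖x‖ ^ 2)⁻¹ * ‖CFC.sqrt a x‖ ^ 2, ?_, ?_⟩
  · have := norm_pos_iff.2 hx0
    have := norm_pos_iff.2 hx
    positivity
  · calc ((‖x‖ ^ 2)⁻¹ * ‖CFC.sqrt a x‖ ^ 2) • p = (‖x‖ ^ 2)⁻¹ • ‖CFC.sqrt a x‖ ^ 2 • p :=
          mul_smul _ _ _
      _ ≤ (‖x‖ ^ 2)⁻¹ • ‖x‖ ^ 2 • a := smul_le_smul_of_nonneg_left h_le (by positivity)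
      _ = a := inv_smul_smul₀ (pow_ne_zero 2 (norm_ne_zero_iff.2 hx0)) a

theorem map_mul_le_mul_map_of_monotoneOn_cfc_of_isStarProjection {f : ℝ → ℝ}
    (hf : MonotoneOn (cfc f) (Ici (0 : H →L[ℂ] H))) (hf0 : f 0 = 0) {P : H →L[ℂ] H}
    (hP : IsStarProjection P) (hP0 : P ≠ 0) (hP1 : P ≠ 1) {c x : ℝ} (hc : 1 ≤ c) (hx : 0 ≤ x) :
    f (c * x) ≤ c * f x := by
  obtain ⟨u, hu, hPu⟩ := exists_norm_eq_one_and_apply_eq_self hP.isIdempotentElem hP0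
  obtain ⟨w, hw, hPw⟩ := exists_norm_eq_one_and_apply_eq_self hP.one_sub.isIdempotentElem
    (sub_ne_zero.2 hP1.symm)
  have huw : inner ℂ u w = 0 := by
    have hPw0 : P w = 0 := by simpa using hPw
    rw [← hPu, ← hP.isSelfAdjoint.adjoint_eq, adjoint_inner_left, hPw0, inner_zero_right]
  exact map_mul_le_mul_map_of_monotoneOn_cfc hf hf0
    (fun t ht ↦ exists_isStarProjection_conjugate_eq_smul hu hw huw (Ioo_subset_Icc_self ht)) hc hx

theorem continuousOn_spectrum_of_monotoneOn_cfc_of_nonneg {f : ℝ → ℝ}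
    (hf : MonotoneOn (cfc f) (Ici (0 : H →L[ℂ] H))) (hf0 : f 0 = 0)
    (hf_mul : ∀ c x, 1 ≤ c → 0 ≤ x → f (c * x) ≤ c * f x) {a : H →L[ℂ] H} (ha : 0 ≤ a) :
    ContinuousOn f (spectrum ℝ a) := by
  rcases eq_or_ne a 0 with rfl | ha0
  · exact continuousOn_spectrum_zero f
  · obtain ⟨p, hp, hp0, r, hr, hpa⟩ := exists_isStarProjection_smul_le ha ha0
    exact continuousOn_spectrum_of_monotoneOn_cfc hf hf0 hf_mul hp hp0 hr hpa

end Hilbert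

/-- **Frank–Geisinger projection inequality.** If `T ≥ 0` is a (bounded) self-adjoint
operator, `P` an orthogonal projection, and `f` operator monotone on `[0,∞)` with
`f 0 = 0`, then `P f(T) P ≤ f(PTP)`. Operator monotonicity is expressed via the
continuous functional calculus. -/
theorem frank_geisinger_projection
    {H : Type*} [NormedAddCommGroup H] [InnerProductSpace ℂ H] [CompleteSpace H]
    (f : ℝ → ℝ) (hf0 : f 0 = 0)
    (hmono : ∀ (X Y : H →L[ℂ] H), 0 ≤ X → X ≤ Y → cfc f X ≤ cfc f Y)
    (P T : H →L[ℂ] H) (hP : IsIdempotentElem P) (hPsa : IsSelfAdjoint P)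
    (hT : IsSelfAdjoint T) (hT0 : 0 ≤ T) :
    P * cfc f T * P ≤ cfc f (P * T * P) := by
  have hPP : IsStarProjection P := ⟨hP, hPsa⟩
  have hf : MonotoneOn (cfc f) (Ici (0 : H →L[ℂ] H)) := fun X hX Y _ hXY ↦ hmono X Y hX hXY
  rcases eq_or_ne P 0 with rfl | hP0
  · simp [hf0]
  rcases eq_or_ne P 1 with rfl | hP1
  · simp
  have hf_mul : ∀ c x, 1 ≤ c → 0 ≤ x → f (c * x) ≤ c * f x := fun _ _ ↦
    map_mul_le_mul_map_of_monotoneOn_cfc_of_isStarProjection hf hf0 hPP hP0 hP1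
  have hf_cont : ∀ a : H →L[ℂ] H, 0 ≤ a → ContinuousOn f (spectrum ℝ a) := fun _ ↦
    continuousOn_spectrum_of_monotoneOn_cfc_of_nonneg hf hf0 hf_mul
  exact conjugate_cfc_le_cfc_conjugate hf hf0 hf_cont hf_mul hPP hT0
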